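/- Let $n = k^2$ be a perfect square with $k \ge 1$. The partition of the $n\times n$ grid graph into $k^2$ axis-aligned $k\times k$ squares (the parts $\{ak,\dots,ak+k-1\}\times\{bk,\dots,bk+k-1\}$ for $0 \le a,b \le k-1$) is a partition into $n$ parts, each of size $n$ and each inducing a connected subgraph, and its cut score equals $2n(\sqrt{n}-1) = 2k^2(k-1)$. -/

import Mathlib

/-!
The grid graph is the box product of two copies of the path graph, and the square containing
`(x, y)` is determined by the pair of block indices `(x / k, y / k)`. Cutting along such a product
labelling commutes with the box product: the cut edges form the box product of the cut edges of the
two paths. A path on `m * k` vertices is cut in `m - 1` places by blocks of length `k`, and a box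
product has `|E(G □ H)| = |E(G)| * |V(H)| + |V(G)| * |E(H)|` edges. Each square is a product of two
segments of the path, hence connected.
-/

open Filter

/-- The `n × n` grid graph: vertices are pairs in `Fin n × Fin n`, adjacent iff they agree
in one coordinate and differ by exactly 1 in the other. -/
def gridGraph (n : ℕ) : SimpleGraph (Fin n × Fin n) :=
  SimpleGraph.fromRel (fun a b =>
    (a.1 = b.1 ∧ (a.2 : ℕ) + 1 = (b.2 : ℕ)) ∨ (a.2 = b.2 ∧ (a.1 : ℕ) + 1 = (b.1 : ℕ)))

/-- `P` is a partition of the vertex set of the `n × n` grid graph into `n` parts,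
each of size `n` and each inducing a connected subgraph. -/
def IsGridPartition (n : ℕ) (P : Finset (Finset (Fin n × Fin n))) : Prop :=
  P.card = n ∧
  (∀ s ∈ P, s.card = n) ∧
  (∀ s ∈ P, ((gridGraph n).induce (↑s : Set (Fin n × Fin n))).Connected) ∧
  (∀ v : Fin n × Fin n, ∃! s, s ∈ P ∧ v ∈ s)

/-- The number of partitions of the `n × n` grid graph into `n` connected parts of size `n`. -/
noncomputable def gridPartitionCount (n : ℕ) : ℕ :=
  Nat.card {P : Finset (Finset (Fin n × Fin n)) // IsGridPartition n P}

/-- The cut score of a partition: the number of edges of the grid graph whose two endpoints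
lie in different parts. -/
noncomputable def cutScore (n : ℕ) (P : Finset (Finset (Fin n × Fin n))) : ℕ :=
  {e ∈ (gridGraph n).edgeSet | ¬ ∃ s ∈ P, ∀ v ∈ e, v ∈ s}.ncard

section GridCut

open Finset SimpleGraph

variable {V W α β : Type*}

/-- The spanning subgraph of `G` whose edges are those cut by the partition of `V` into the fibers
of the labelling `c`. -/
def cutGraph (G : SimpleGraph V) (c : V → α) : SimpleGraph V :=
  G ⊓ (⊤ : SimpleGraph α).comap c

lemma cutGraph_adj {G : SimpleGraph V} {c : V → α} {u v : V} :
    (cutGraph G c).Adj u v ↔ G.Adj u v ∧ c u ≠ c v :=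
  Iff.rfl

lemma cutGraph_comp_of_injective (G : SimpleGraph V) (c : V → α) {e : α → β}
    (he : Function.Injective e) : cutGraph G (e ∘ c) = cutGraph G c := by
  ext u v
  simp only [cutGraph_adj, Function.comp_apply, he.ne_iff]

lemma cutGraph_boxProd (G : SimpleGraph V) (H : SimpleGraph W) (f : V → α) (g : W → β) :
    cutGraph (G □ H) (Prod.map f g) = cutGraph G f □ cutGraph H g := by
  ext ⟨a, b⟩ ⟨a', b'⟩
  simp only [cutGraph_adj, boxProd_adj, Prod.map_apply, ne_eq, Prod.mk.injEq]
  -- An edge of `G □ H` fixes one coordinate, so only the other one can change its label.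
  grind

lemma ncard_edgeSet_boxProd [Finite V] [Finite W] (G : SimpleGraph V) (H : SimpleGraph W) :
    (G □ H).edgeSet.ncard =
      G.edgeSet.ncard * Nat.card W + Nat.card V * H.edgeSet.ncard := by
  classical
  have := Fintype.ofFinite V
  have := Fintype.ofFinite W
  simp only [← coe_edgeFinset, Set.ncard_coe_finset, Nat.card_eq_fintype_card]
  refine Nat.eq_of_mul_eq_mul_left two_pos ?_
  calc 2 * #(G □ H).edgeFinset
      = ∑ v, ∑ w, (G.degree v + H.degree w) := by
        rw [← sum_degrees_eq_twice_card_edges, Fintype.sum_prod_type]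
        simp only [degree_boxProd]
    _ = (∑ v, G.degree v) * Fintype.card W + Fintype.card V * ∑ w, H.degree w := by
        simp [sum_add_distrib, ← mul_sum, mul_comm]
    _ = 2 * (#G.edgeFinset * Fintype.card W + Fintype.card V * #H.edgeFinset) := by
        rw [sum_degrees_eq_twice_card_edges, sum_degrees_eq_twice_card_edges]
        ring

lemma connected_induce_prod {G : SimpleGraph V} {H : SimpleGraph W} {s : Set V} {t : Set W}
    (hs : (G.induce s).Connected) (ht : (H.induce t).Connected) :
    ((G □ H).induce (s ×ˢ t)).Connected := by
  let e : (G □ H).induce (s ×ˢ t) ≃g (G.induce s □ H.induce t) :=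
    ⟨Equiv.Set.prod s t, by simp only [boxProd_adj, Subtype.ext_iff, comap_adj]; rfl⟩
  exact e.connected_iff.2 (hs.boxProd ht)

lemma ncard_edgeSet_cutGraph_pathGraph [DecidableEq α] (n : ℕ) (c : ℕ → α) :
    (cutGraph (pathGraph n) fun i ↦ c i).edgeSet.ncard =
      #{i ∈ range (n - 1) | c i ≠ c (i + 1)} := by
  rw [← Set.ncard_coe_finset]
  symm
  refine Set.ncard_congr
    (fun i hi ↦ s(⟨i, by grind⟩, ⟨i + 1, by grind⟩)) (fun i hi ↦ ?_) (fun i j hi hj h ↦ ?_) ?_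
  · simpa [cutGraph_adj, pathGraph_adj] using (mem_filter.1 hi).2
  · simp only [Sym2.eq_iff, Fin.mk.injEq] at h
    omega
  · rintro ⟨u, v⟩ h
    have hc : c u ≠ c v := h.2
    obtain huv | hvu := pathGraph_adj.1 h.1
    · exact ⟨u, by grind, by simp [huv]⟩
    · exact ⟨v, by grind, by simp [hvu, Sym2.eq_swap]⟩

lemma ncard_edgeSet_cutGraph_divNat {k : ℕ} (hk : 0 < k) (m : ℕ) :
    (cutGraph (pathGraph (m * k)) Fin.divNat).edgeSet.ncard = m - 1 := by
  have hjump (i : ℕ) : i / k ≠ (i + 1) / k ↔ k ∣ i + 1 := by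
    rw [Nat.succ_div]
    split_ifs with h <;> simp [h]
  calc (cutGraph (pathGraph (m * k)) Fin.divNat).edgeSet.ncard
      = (cutGraph (pathGraph (m * k)) fun i ↦ (i : ℕ) / k).edgeSet.ncard := by
        rw [← cutGraph_comp_of_injective _ _ Fin.val_injective]
        rfl
    _ = #{i ∈ range (m * k - 1) | k ∣ i + 1} := by
        rw [ncard_edgeSet_cutGraph_pathGraph _ (· / k)]
        simp only [hjump]
    _ = (m * k - 1) / k := Nat.card_multiples _ _
    _ = m - 1 := by
        obtain rfl | hm := m.eq_zero_or_pos
        · simp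
        · simpa [mul_comm m k] using Nat.mul_sub_div 0 k m (by positivity)

lemma range_finProdFinEquiv_mk {m k : ℕ} (a : Fin m) :
    Set.range (fun i : Fin k ↦ finProdFinEquiv (a, i)) = Fin.divNat ⁻¹' {a} := by
  ext x
  constructor
  · rintro ⟨i, rfl⟩
    exact congrArg Prod.fst (finProdFinEquiv.symm_apply_apply (a, i))
  · rintro rfl
    exact ⟨x.modNat, finProdFinEquiv.apply_symm_apply x⟩

lemma card_filter_divNat_eq {m k : ℕ} (a : Fin m) : #{x : Fin (m * k) | x.divNat = a} = k := by
  have hinj : Function.Injective fun i : Fin k ↦ finProdFinEquiv (a, i) :=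
    finProdFinEquiv.injective.comp (Prod.mk_right_injective a)
  rw [← Set.ncard_coe_finset, coe_filter_univ]
  change (Fin.divNat ⁻¹' {a}).ncard = k
  rw [← range_finProdFinEquiv_mk, ← Set.image_univ, Set.ncard_image_of_injective _ hinj,
    Set.ncard_univ, Nat.card_fin]

lemma connected_induce_preimage_divNat {m k : ℕ} (hk : 0 < k) (a : Fin m) :
    ((pathGraph (m * k)).induce (Fin.divNat ⁻¹' {a})).Connected := by
  have : NeZero k := ⟨hk.ne'⟩
  have hpath : (pathGraph k).Connected := ⟨pathGraph_preconnected k⟩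
  rw [← range_finProdFinEquiv_mk]
  let f : pathGraph k →g (pathGraph (m * k)).induce
      (Set.range fun i : Fin k ↦ finProdFinEquiv (a, i)) :=
    ⟨Set.rangeFactorization _, fun {i j} h ↦ by
      change (pathGraph (m * k)).Adj (finProdFinEquiv (a, i)) (finProdFinEquiv (a, j))
      rw [pathGraph_adj] at h ⊢
      simp only [finProdFinEquiv_apply_val]
      omega⟩
  exact hpath.map f Set.rangeFactorization_surjective

lemma gridGraph_eq_boxProd (n : ℕ) : gridGraph n = pathGraph n □ pathGraph n := by
  ext u v
  simp only [gridGraph, fromRel_adj, boxProd_adj, pathGraph_adj]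
  grind

section Fibers

variable [Fintype V] [DecidableEq V] [Fintype α] [DecidableEq α]

/-- The parts of the partition of `V` induced by the labelling `c`. Every label contributes a part,
so `∅` is one of them when `c` is not surjective. -/
def fibers (c : V → α) : Finset (Finset V) :=
  univ.image fun a ↦ univ.filter fun v ↦ c v = a

lemma card_fibers {c : V → α} (hc : Function.Surjective c) : #(fibers c) = Fintype.card α := by
  refine card_image_of_injective _ (hc.forall.2 fun v b hb ↦ ?_)
  simpa using Finset.ext_iff.1 hb v

lemma existsUnique_mem_fibers (c : V → α) (v : V) : ∃! s, s ∈ fibers c ∧ v ∈ s := by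
  refine ⟨univ.filter fun w ↦ c w = c v, by simp [fibers], ?_⟩
  simp only [fibers, mem_image, mem_univ, true_and]
  rintro _ ⟨⟨a, rfl⟩, hv⟩
  rw [(mem_filter_univ v).1 hv]

lemma exists_mem_fibers_iff {c : V → α} {u v : V} :
    (∃ s ∈ fibers c, u ∈ s ∧ v ∈ s) ↔ c u = c v := by
  simp only [fibers, mem_image, mem_univ, true_and, exists_exists_eq_and, mem_filter_univ]
  exact ⟨fun ⟨_, hu, hv⟩ ↦ hu.trans hv.symm, fun h ↦ ⟨c v, h, rfl⟩⟩

end Fibers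

section GridPartition

variable {n : ℕ} [Fintype α] [DecidableEq α]

lemma isGridPartition_fibers {c : Fin n × Fin n → α} (hα : Fintype.card α = n)
    (hcard : ∀ a, #{v | c v = a} = n)
    (hconn : ∀ a, ((gridGraph n).induce (c ⁻¹' {a})).Connected) :
    IsGridPartition n (fibers c) := by
  have hsurj : Function.Surjective c := fun a ↦ by
    obtain ⟨v, hv⟩ := (hconn a).nonempty
    exact ⟨v, hv⟩
  refine ⟨(card_fibers hsurj).trans hα, ?_, ?_, existsUnique_mem_fibers c⟩
  · exact forall_mem_image.2 fun a _ ↦ hcard a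
  · refine forall_mem_image.2 fun a _ ↦ ?_
    rw [coe_filter_univ]
    exact hconn a

lemma cutScore_fibers (c : Fin n × Fin n → α) :
    cutScore n (fibers c) = (cutGraph (gridGraph n) c).edgeSet.ncard := by
  unfold cutScore
  congr 1
  ext e
  induction e with | h u v =>
  simp only [Set.mem_ofPred_eq, mem_edgeSet, Sym2.ball, exists_mem_fibers_iff, cutGraph_adj, ne_eq]

end GridPartition

lemma isGridPartition_fibers_divNat {k : ℕ} (hk : 0 < k) :
    IsGridPartition (k * k)
      (fibers (Prod.map Fin.divNat Fin.divNat : _ → Fin k × Fin k)) := by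
  refine isGridPartition_fibers (by simp) (fun ⟨a, b⟩ ↦ ?_) (fun ⟨a, b⟩ ↦ ?_)
  · have hprod : ({v | Prod.map Fin.divNat Fin.divNat v = (a, b)} :
        Finset (Fin (k * k) × Fin (k * k))) =
        ({x | x.divNat = a} : Finset _) ×ˢ ({y | y.divNat = b} : Finset _) := by
      ext v
      simp [Prod.ext_iff]
    rw [hprod, card_product, card_filter_divNat_eq, card_filter_divNat_eq]
  · rw [gridGraph_eq_boxProd, ← Set.singleton_prod_singleton, Set.preimage_prod_map_prod]
    exact connected_induce_prod (connected_induce_preimage_divNat hk a)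
      (connected_induce_preimage_divNat hk b)

lemma cutScore_fibers_divNat {k : ℕ} (hk : 0 < k) (m : ℕ) :
    cutScore (m * k) (fibers (Prod.map Fin.divNat Fin.divNat : _ → Fin m × Fin m)) =
      2 * (m * k) * (m - 1) := by
  rw [cutScore_fibers, gridGraph_eq_boxProd, cutGraph_boxProd, ncard_edgeSet_boxProd,
    ncard_edgeSet_cutGraph_divNat hk, Nat.card_eq_fintype_card, Fintype.card_fin]
  ring

end GridCut

theorem square_partition_cut_score (k : ℕ) (hk : 1 ≤ k) :
    IsGridPartition (k ^ 2)
      (Finset.image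
        (fun ab : Fin k × Fin k =>
          Finset.univ.filter (fun v : Fin (k ^ 2) × Fin (k ^ 2) =>
            (v.1 : ℕ) / k = (ab.1 : ℕ) ∧ (v.2 : ℕ) / k = (ab.2 : ℕ)))
        Finset.univ) ∧
    cutScore (k ^ 2)
      (Finset.image
        (fun ab : Fin k × Fin k =>
          Finset.univ.filter (fun v : Fin (k ^ 2) × Fin (k ^ 2) =>
            (v.1 : ℕ) / k = (ab.1 : ℕ) ∧ (v.2 : ℕ) / k = (ab.2 : ℕ)))
        Finset.univ) = 2 * k ^ 2 * (k - 1) := by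
  rw [sq]
  have hparts : Finset.univ.image (fun ab : Fin k × Fin k ↦
      Finset.univ.filter fun v : Fin (k * k) × Fin (k * k) ↦
        (v.1 : ℕ) / k = (ab.1 : ℕ) ∧ (v.2 : ℕ) / k = (ab.2 : ℕ)) =
      fibers (Prod.map Fin.divNat Fin.divNat) := by
    simp [fibers, Prod.ext_iff, Fin.ext_iff]
  rw [hparts]
  exact ⟨isGridPartition_fibers_divNat hk, cutScore_fibers_divNat hk k⟩
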